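/- Let X be a reflexive real Banach space, Y a real normed space, and T, A : X → Y compact linear operators such that M_T = D ∪ (−D), where D is a nonempty compact connected subset of the unit sphere S_X. Let ε ∈ [0,1). Then T ⊥_B^ε A if and only if there exists x ∈ M_T such that ‖Tx + λAx‖² ≥ ‖T‖² − 2ε‖T‖‖λA‖ for all real λ. -/

import Mathlib

/-!
Split the two-sided bound at `λ = 0` into a right and a left half, with `c = 2ε‖T‖‖A‖`.

If `T, A` satisfy the right half, then for every `t > 0` the set `K t` of those `x` in the unit
ball with `‖T x + t A x‖² ≥ ‖T‖² - c t` is nonempty, because the compact operator `T + t A` attains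
its norm on the weakly compact ball. Each `K t` is weakly compact, and convexity of
`t ↦ ‖T x + t A x‖²` makes `K` monotone in `t`, so Cantor's intersection theorem gives a point of
`⋂ t > 0, K t`; letting `t → 0` shows that it lies in `M_T`. Up to a sign it lies in `D`. The left
half is the same statement for `-A`.

The points of `D` satisfying the right half and those satisfying the left half thus form two
nonempty closed sets. By the same convexity they cover `D`, so connectedness makes them meet.
-/

open Metric Set NormedSpace

section WeakTopology

variable {𝕜 X Y : Type*} [RCLike 𝕜]

theorem isCompact_toWeakSpace_symm_preimage_closedBall [NormedAddCommGroup X] [NormedSpace 𝕜 X]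
    (hrefl : Function.Surjective (inclusionInDoubleDual 𝕜 X)) (a : X) (r : ℝ) :
    IsCompact ((toWeakSpace 𝕜 X).symm ⁻¹' closedBall a r) := by
  have hsurj : Function.Surjective (inclusionInDoubleDualWeak 𝕜 X) := hrefl
  have hball : (toWeakSpace 𝕜 X).symm ⁻¹' closedBall a r = inclusionInDoubleDualWeak 𝕜 X ⁻¹'
      (WeakDual.toStrongDual ⁻¹' closedBall (inclusionInDoubleDual 𝕜 X a) r) := by
    ext x
    rw [mem_preimage, mem_closedBall, ← (inclusionInDoubleDualLi 𝕜).dist_map]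
    rfl
  rw [hball]
  exact (isEmbedding_inclusionInDoubleDualWeak 𝕜 X).isCompact_preimage'
    (WeakDual.isCompact_closedBall _ _) (hsurj.range_eq ▸ subset_univ _)

variable [NormedAddCommGroup Y] [NormedSpace 𝕜 Y]

theorem continuousOn_weakSpace_of_isCompactOperator [SeminormedAddCommGroup X] [NormedSpace 𝕜 X]
    {T : X →L[𝕜] Y} (hT : IsCompactOperator T) {S : Set X} (hS : Bornology.IsBounded S) :
    ContinuousOn (fun x ↦ T ((toWeakSpace 𝕜 X).symm x)) ((toWeakSpace 𝕜 X).symm ⁻¹' S) := by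
  intro x _
  -- On the compact set `K` the norm topology is determined by the functionals `g`, and every
  -- `g ∘ T` is weakly continuous.
  obtain ⟨K, hK, hTK⟩ :=
    IsCompactOperator.image_subset_compact_of_bounded (f := (T : X →ₗ[𝕜] Y)) hT hS
  refine hK.tendsto_nhds_of_unique_mapClusterPt
    (eventually_nhdsWithin_of_forall fun y hy ↦ hTK ⟨_, hy, rfl⟩) fun y _ hy ↦ ?_
  refine (SeparatingDual.eq_iff_forall_dual_eq (R := 𝕜)).2 fun g ↦ ?_
  have hweak : Continuous fun z : WeakSpace 𝕜 X ↦ g (T ((toWeakSpace 𝕜 X).symm z)) :=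
    WeakBilin.eval_continuous (topDualPairing 𝕜 X).flip (g ∘L T)
  have hcluster := hy.continuousAt_comp g.continuous.continuousAt
  exact eq_of_nhds_neBot (hcluster.neBot.mono (inf_le_inf_left _ hweak.continuousWithinAt))

theorem exists_norm_le_one_norm_apply_eq_opNorm_of_isCompactOperator [NormedAddCommGroup X]
    [NormedSpace 𝕜 X] (hrefl : Function.Surjective (inclusionInDoubleDual 𝕜 X))
    {T : X →L[𝕜] Y} (hT : IsCompactOperator T) : ∃ x, ‖x‖ ≤ 1 ∧ ‖T x‖ = ‖T‖ := by
  obtain ⟨x, hx, hsup⟩ :=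
    (isCompact_toWeakSpace_symm_preimage_closedBall hrefl 0 1).exists_sSup_image_eq
      ⟨0, by simp⟩ (continuousOn_weakSpace_of_isCompactOperator hT isBounded_closedBall).norm
  refine ⟨(toWeakSpace 𝕜 X).symm x, mem_closedBall_zero_iff.1 hx, ?_⟩
  rw [← hsup, ← T.sSup_unitClosedBall_eq_norm]
  rfl

end WeakTopology

section RightApproxBOrth

variable {E : Type*} [SeminormedAddCommGroup E] [NormedSpace ℝ E]

/-- The half of approximate Birkhoff–James orthogonality that concerns nonnegative scalars. The
slack `2ε‖u‖‖v‖` of the two-sided notion is replaced by a free constant `c`, so that vectors `T x`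
and `A x` can be compared with the slack `2ε‖T‖‖A‖` of the operators. The half for nonpositive
scalars is `RightApproxBOrth c u (-v)`. -/
def RightApproxBOrth (c : ℝ) (u v : E) : Prop :=
  ∀ t : ℝ, 0 ≤ t → ‖u‖ ^ 2 - c * t ≤ ‖u + t • v‖ ^ 2

theorem convexOn_norm_add_smul_sq (u v : E) :
    ConvexOn ℝ univ fun t : ℝ ↦ ‖u + t • v‖ ^ 2 :=
  ((convexOn_univ_norm.translate_right u).comp_linearMap (LinearMap.toSpanSingleton ℝ E v)).pow
    (fun _ _ ↦ norm_nonneg _) 2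

theorem sq_sub_mul_le_norm_add_smul_sq_of_le {u v : E} {M c s t : ℝ} (hu : ‖u‖ ≤ M) (hs : 0 < s)
    (hst : s ≤ t) (h : M ^ 2 - c * s ≤ ‖u + s • v‖ ^ 2) :
    M ^ 2 - c * t ≤ ‖u + t • v‖ ^ 2 := by
  rcases hst.eq_or_lt with rfl | hst
  · exact h
  have hslope := (convexOn_norm_add_smul_sq u v).slope_mono_adjacent
    (mem_univ 0) (mem_univ t) hs hst
  have hleft : -c ≤ (‖u + s • v‖ ^ 2 - ‖u + (0 : ℝ) • v‖ ^ 2) / (s - 0) := by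
    have hu2 : ‖u‖ ^ 2 ≤ M ^ 2 := by gcongr
    rw [le_div_iff₀ (by simpa using hs), zero_smul, add_zero]
    linarith
  have hright := (le_div_iff₀ (sub_pos.2 hst)).1 (hleft.trans hslope)
  linarith

theorem RightApproxBOrth.or_neg {c : ℝ} (hc : 0 ≤ c) (u v : E) :
    RightApproxBOrth c u v ∨ RightApproxBOrth c u (-v) := by
  by_contra! hcon
  simp only [RightApproxBOrth, not_forall, not_le] at hcon
  obtain ⟨⟨a, ha, hua⟩, b, hb, hub⟩ := hcon
  replace ha : 0 < a := ha.lt_of_ne (by rintro rfl; simp at hua)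
  replace hb : 0 < b := hb.lt_of_ne (by rintro rfl; simp at hub)
  have hslope := (convexOn_norm_add_smul_sq u v).slope_mono_adjacent
    (mem_univ (-b)) (mem_univ a) (neg_lt_zero.2 hb) ha
  simp only [zero_smul, add_zero, sub_zero, zero_sub, neg_neg, neg_smul] at hslope
  rw [smul_neg] at hub
  have hleft : c < (‖u‖ ^ 2 - ‖u + -(b • v)‖ ^ 2) / b := by
    rw [lt_div_iff₀ hb]
    linarith
  have hright : (‖u + a • v‖ ^ 2 - ‖u‖ ^ 2) / a < -c := by
    rw [div_lt_iff₀ ha]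
    linarith
  linarith

theorem rightApproxBOrth_neg_neg {c : ℝ} {u v : E} :
    RightApproxBOrth c (-u) (-v) ↔ RightApproxBOrth c u v := by
  simp only [RightApproxBOrth, smul_neg, ← neg_add, norm_neg]

theorem forall_norm_sq_sub_mul_abs_le_iff {c : ℝ} {u v : E} :
    (∀ l : ℝ, ‖u‖ ^ 2 - c * |l| ≤ ‖u + l • v‖ ^ 2) ↔
      RightApproxBOrth c u v ∧ RightApproxBOrth c u (-v) := by
  refine ⟨fun h ↦ ⟨fun t ht ↦ ?_, fun t ht ↦ ?_⟩, fun ⟨hr, hl⟩ l ↦ ?_⟩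
  · simpa [abs_of_nonneg ht] using h t
  · simpa [abs_of_nonneg ht] using h (-t)
  · rcases le_total 0 l with h | h
    · simpa [abs_of_nonneg h] using hr l h
    · simpa [abs_of_nonpos h] using hl (-l) (neg_nonneg.2 h)

theorem isClosed_setOf_rightApproxBOrth {Z : Type*} [TopologicalSpace Z] (c : ℝ) {f g : Z → E}
    (hf : Continuous f) (hg : Continuous g) : IsClosed {z | RightApproxBOrth c (f z) (g z)} := by
  simp only [RightApproxBOrth, ofPred_forall]
  exact isClosed_iInter fun t ↦ isClosed_iInter fun _ ↦ isClosed_le (by fun_prop) (by fun_prop)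

theorem exists_mem_rightApproxBOrth_and_neg_of_isPreconnected {Z : Type*} [TopologicalSpace Z]
    {D : Set Z} (hD : IsPreconnected D) {f g : Z → E} (hf : Continuous f) (hg : Continuous g)
    {c : ℝ} (hc : 0 ≤ c) (hright : ∃ z ∈ D, RightApproxBOrth c (f z) (g z))
    (hleft : ∃ z ∈ D, RightApproxBOrth c (f z) (-g z)) :
    ∃ z ∈ D, RightApproxBOrth c (f z) (g z) ∧ RightApproxBOrth c (f z) (-g z) :=
  isPreconnected_closed_iff.1 hD _ _ (isClosed_setOf_rightApproxBOrth c hf hg)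
    (isClosed_setOf_rightApproxBOrth c hf hg.neg) (fun _ _ ↦ RightApproxBOrth.or_neg hc _ _)
    hright hleft

theorem exists_mem_rightApproxBOrth_of_subset_union_neg {F : Type*} [SeminormedAddCommGroup F]
    [NormedSpace ℝ F] {T A : F →L[ℝ] E} {c : ℝ} {M D : Set F} (hM : M ⊆ D ∪ -D)
    (h : ∃ x ∈ M, RightApproxBOrth c (T x) (A x)) : ∃ x ∈ D, RightApproxBOrth c (T x) (A x) := by
  obtain ⟨x, hxM, hx⟩ := h
  rcases hM hxM with hxD | hxD
  · exact ⟨x, hxD, hx⟩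
  · exact ⟨-x, hxD, by simpa only [map_neg, rightApproxBOrth_neg_neg] using hx⟩

end RightApproxBOrth

section NormAttainmentSet

variable {𝕜 X Y : Type*} [NontriviallyNormedField 𝕜] [SeminormedAddCommGroup X] [NormedSpace 𝕜 X]
  [SeminormedAddCommGroup Y] [NormedSpace 𝕜 Y]

/-- The norm attainment set `M_T` of an operator `T`: the unit vectors at which `T` attains its
norm. -/
def normAttainmentSet (T : X →L[𝕜] Y) : Set X :=
  {x | ‖x‖ = 1 ∧ ‖T x‖ = ‖T‖}

theorem mem_normAttainmentSet_of_opNorm_le {T : X →L[𝕜] Y} (hT : ‖T‖ ≠ 0) {x : X}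
    (hx : ‖x‖ ≤ 1) (hTx : ‖T‖ ≤ ‖T x‖) : x ∈ normAttainmentSet T := by
  have hx1 : 1 ≤ ‖x‖ := by
    refine le_of_mul_le_mul_left ?_ ((norm_nonneg T).lt_of_ne' hT)
    simpa using hTx.trans (T.le_opNorm x)
  exact ⟨hx.antisymm hx1, (T.unit_le_opNorm x hx).antisymm hTx⟩

end NormAttainmentSet

section ReflexiveDomain

variable {X Y : Type*} [NormedAddCommGroup X] [NormedSpace ℝ X] [NormedAddCommGroup Y]
  [NormedSpace ℝ Y] {T A : X →L[ℝ] Y} {c : ℝ}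

theorem exists_norm_le_one_forall_nonneg_sq_sub_mul_le
    (hrefl : Function.Surjective (inclusionInDoubleDual ℝ X)) (hT : IsCompactOperator T)
    (hA : IsCompactOperator A) (h : RightApproxBOrth c T A) :
    ∃ x : X, ‖x‖ ≤ 1 ∧ ∀ t : ℝ, 0 ≤ t → ‖T‖ ^ 2 - c * t ≤ ‖T x + t • A x‖ ^ 2 := by
  have hcompact (t : ℝ) : IsCompactOperator (T + t • A) := hT.add (hA.smul t)
  let B : Set (WeakSpace ℝ X) := (toWeakSpace ℝ X).symm ⁻¹' closedBall 0 1
  let K (t : Ioi (0 : ℝ)) : Set (WeakSpace ℝ X) :=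
    B ∩ {x | ‖T‖ ^ 2 - c * t ≤ ‖(T + (t : ℝ) • A) ((toWeakSpace ℝ X).symm x)‖ ^ 2}
  have hB : IsCompact B := isCompact_toWeakSpace_symm_preimage_closedBall hrefl 0 1
  have hKclosed (t) : IsClosed (K t) := by
    have hcont : ContinuousOn (fun x ↦ (T + (t : ℝ) • A) ((toWeakSpace ℝ X).symm x)) B :=
      continuousOn_weakSpace_of_isCompactOperator (hcompact t) isBounded_closedBall
    exact (hcont.norm.pow 2).preimage_isClosed_of_isClosed hB.isClosed isClosed_Ici
  have hKnonempty (t) : (K t).Nonempty := by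
    obtain ⟨x, hx, hmax⟩ :=
      exists_norm_le_one_norm_apply_eq_opNorm_of_isCompactOperator hrefl (hcompact t)
    refine ⟨toWeakSpace ℝ X x, mem_closedBall_zero_iff.2 hx, ?_⟩
    simpa only [mem_ofPred_eq, LinearEquiv.symm_apply_apply, hmax] using h t t.2.le
  have hKmono : Monotone K := fun s t hst x hx ↦
    ⟨hx.1, sq_sub_mul_le_norm_add_smul_sq_of_le
      (T.unit_le_opNorm _ (mem_closedBall_zero_iff.1 hx.1)) s.2 hst hx.2⟩
  obtain ⟨x, hx⟩ := IsCompact.nonempty_iInter_of_directed_nonempty_isCompact_isClosed K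
    hKmono.directed_ge hKnonempty (fun t ↦ hB.of_isClosed_subset (hKclosed t) inter_subset_left)
    hKclosed
  rw [mem_iInter] at hx
  set z : X := (toWeakSpace ℝ X).symm x
  have hpos : ∀ t ∈ Ioi (0 : ℝ), ‖T‖ ^ 2 - c * t ≤ ‖T z + t • A z‖ ^ 2 :=
    fun t ht ↦ (hx ⟨t, ht⟩).2
  refine ⟨z, mem_closedBall_zero_iff.1 (hx ⟨1, mem_Ioi.2 one_pos⟩).1, fun t ht ↦ ?_⟩
  exact le_on_closure hpos (by fun_prop) (by fun_prop) (by rwa [closure_Ioi, mem_Ici])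

theorem exists_mem_normAttainmentSet_rightApproxBOrth
    (hrefl : Function.Surjective (inclusionInDoubleDual ℝ X)) (hT : IsCompactOperator T)
    (hA : IsCompactOperator A) (hT0 : T ≠ 0) (h : RightApproxBOrth c T A) :
    ∃ x ∈ normAttainmentSet T, RightApproxBOrth c (T x) (A x) := by
  obtain ⟨x, hx, hbound⟩ := exists_norm_le_one_forall_nonneg_sq_sub_mul_le hrefl hT hA h
  have hTx : ‖T‖ ≤ ‖T x‖ :=
    le_of_sq_le_sq (by simpa using hbound 0 le_rfl) (norm_nonneg _)
  have hxT := mem_normAttainmentSet_of_opNorm_le (norm_ne_zero_iff.2 hT0) hx hTx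
  exact ⟨x, hxT, fun t ht ↦ hxT.2 ▸ hbound t ht⟩

theorem exists_mem_rightApproxBOrth_and_neg
    (hrefl : Function.Surjective (inclusionInDoubleDual ℝ X)) (hT : IsCompactOperator T)
    (hA : IsCompactOperator A) (hT0 : T ≠ 0) {D : Set X} (hDconn : IsPreconnected D)
    (hD : normAttainmentSet T ⊆ D ∪ -D) (hc : 0 ≤ c) (hright : RightApproxBOrth c T A)
    (hleft : RightApproxBOrth c T (-A)) :
    ∃ x ∈ D, RightApproxBOrth c (T x) (A x) ∧ RightApproxBOrth c (T x) (-A x) :=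
  exists_mem_rightApproxBOrth_and_neg_of_isPreconnected hDconn T.continuous A.continuous hc
    (exists_mem_rightApproxBOrth_of_subset_union_neg hD <|
      exists_mem_normAttainmentSet_rightApproxBOrth hrefl hT hA hT0 hright)
    (exists_mem_rightApproxBOrth_of_subset_union_neg hD <|
      exists_mem_normAttainmentSet_rightApproxBOrth hrefl hT hA.neg hT0 hleft)

theorem approx_B_orth_iff_of_norm_attainment_symmetric_connected_general
    (hrefl : Function.Surjective (inclusionInDoubleDual ℝ X)) (hT : IsCompactOperator T)
    (hA : IsCompactOperator A) {D : Set X} (hDconn : IsConnected D)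
    (hMT : normAttainmentSet T = D ∪ -D) {ε : ℝ} (hε : 0 ≤ ε) :
    (∀ l : ℝ, ‖T + l • A‖ ^ 2 ≥ ‖T‖ ^ 2 - 2 * ε * ‖T‖ * ‖l • A‖) ↔
      ∃ x ∈ normAttainmentSet T,
        ∀ l : ℝ, ‖T x + l • A x‖ ^ 2 ≥ ‖T‖ ^ 2 - 2 * ε * ‖T‖ * ‖l • A‖ := by
  refine ⟨fun h ↦ ?_, fun ⟨x, hx, h⟩ l ↦ (h l).trans ?_⟩
  · have hDT : D ⊆ normAttainmentSet T := hMT ▸ subset_union_left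
    rcases eq_or_ne T 0 with rfl | hT0
    · exact ⟨_, hDT hDconn.nonempty.some_mem, by simp⟩
    have hslack (l : ℝ) : 2 * ε * ‖T‖ * ‖l • A‖ = 2 * ε * ‖T‖ * ‖A‖ * |l| := by
      rw [norm_smul, Real.norm_eq_abs]
      ring
    simp only [hslack, ge_iff_le] at h ⊢
    obtain ⟨hright, hleft⟩ := forall_norm_sq_sub_mul_abs_le_iff.1 h
    obtain ⟨x, hxD, hx⟩ := exists_mem_rightApproxBOrth_and_neg hrefl hT hA hT0
      hDconn.isPreconnected hMT.subset (by positivity) hright hleft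
    refine ⟨x, hDT hxD, ?_⟩
    simpa only [(hDT hxD).2] using forall_norm_sq_sub_mul_abs_le_iff.2 hx
  · gcongr
    exact (T + l • A).unit_le_opNorm x hx.1.le

end ReflexiveDomain

/-- Characterization of `T ⊥_B^ε A` for compact operators on a reflexive Banach
space whose norm attainment set has the form `D ∪ (-D)` with `D` a nonempty
compact connected subset of the unit sphere. -/
theorem approx_B_orth_iff_of_norm_attainment_symmetric_connected
    {X Y : Type*} [NormedAddCommGroup X] [NormedSpace ℝ X] [CompleteSpace X]
    [NormedAddCommGroup Y] [NormedSpace ℝ Y]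
    (hrefl : Function.Surjective (NormedSpace.inclusionInDoubleDual ℝ X))
    (T A : X →L[ℝ] Y) (hT : IsCompactOperator T) (hA : IsCompactOperator A)
    (D : Set X) (hDne : D.Nonempty) (hDcpt : IsCompact D) (hDconn : IsConnected D)
    (hDsphere : D ⊆ {x : X | ‖x‖ = 1})
    (hMT : {x : X | ‖x‖ = 1 ∧ ‖T x‖ = ‖T‖} = D ∪ (-D))
    (ε : ℝ) (hε0 : 0 ≤ ε) (hε1 : ε < 1) :
    (∀ l : ℝ, ‖T + l • A‖ ^ 2 ≥ ‖T‖ ^ 2 - 2 * ε * ‖T‖ * ‖l • A‖) ↔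
      ∃ x : X, ‖x‖ = 1 ∧ ‖T x‖ = ‖T‖ ∧
        ∀ l : ℝ, ‖T x + l • A x‖ ^ 2 ≥ ‖T‖ ^ 2 - 2 * ε * ‖T‖ * ‖l • A‖ := by
  simpa only [normAttainmentSet, mem_ofPred_eq, and_assoc] using
    approx_B_orth_iff_of_norm_attainment_symmetric_connected_general hrefl hT hA hDconn hMT hε0
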